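/- (Worst-case efficiency example) Fix n ≥ 2 and consider the normalized game with n machines and m = n² + n users: n² 'uniform' users each with weight 1/n on every machine, and n 'focused' users, the k-th of which has weight 1 on machine k and weight 0 on all other machines; all budgets are 1. Then the bid profile in which every uniform user bids 1/n on every machine and the k-th focused user bids 1 on machine k is a Nash equilibrium; the total bid on every machine is n + 1, the social welfare at this equilibrium equals 2n/(n+1) < 2, the social optimum equals n, and hence the efficiency equals 2/(n+1). -/

import Mathlib

open Finset

/-- User `i`'s utility at the bid profile `x` (division by zero is zero, matching the
convention that a machine with no bids is allocated to nobody). -/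
noncomputable def util {I J : Type*} [Fintype I] [Fintype J]
    (w x : I → J → ℝ) (i : I) : ℝ :=
  ∑ j, w i j * (x i j / ∑ k, x k j)

/-- Nash equilibrium: a feasible profile (nonnegative bids, each user spending exactly
his budget) where no user can strictly increase his utility by unilaterally replacing
his own bid vector with another feasible one. -/
def IsNash {I J : Type*} [Fintype I] [Fintype J] [DecidableEq I]
    (X : I → ℝ) (w x : I → J → ℝ) : Prop :=
  ((∀ i j, 0 ≤ x i j) ∧ ∀ i, ∑ j, x i j = X i) ∧
    ∀ (i : I) (xi : J → ℝ), (∀ j, 0 ≤ xi j) → ∑ j, xi j = X i →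
      util w (Function.update x i xi) i ≤ util w x i

/-!
A user's share `t / (t + c)` of a machine is concave in his bid `t`, so his utility lies below its
tangent at the current profile, and a user whose marginal utility is the same on every machine he
bids on, and no larger on the others, has no profitable deviation. In the example every machine
attracts the same total bid, so a uniform user faces equal marginals, while a focused user has
marginal zero off his own machine. As the bid matrix coincides with the weight matrix, a
machine contributes to the welfare the sum of the squares of its weights divided by its total bid,
which is `(n² · (1/n)² + 1) / (n + 1) = 2 / (n + 1)`.
-/

section BestResponse

lemma div_add_le_tangent {t a c : ℝ} (ht : 0 ≤ t) (hc : 0 ≤ c) (hac : 0 < a + c) :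
    t / (t + c) ≤ a / (a + c) + c / (a + c) ^ 2 * (t - a) := by
  rcases (add_nonneg ht hc).eq_or_lt with htc | htc
  · obtain rfl : t = 0 := by linarith
    obtain rfl : c = 0 := by linarith
    have ha : a ≠ 0 := by linarith
    simp [ha]
  · have gap : a / (a + c) + c / (a + c) ^ 2 * (t - a) - t / (t + c) =
        c * (t - a) ^ 2 / ((a + c) ^ 2 * (t + c)) := by
      field_simp
      ring
    have gap_nonneg : 0 ≤ c * (t - a) ^ 2 / ((a + c) ^ 2 * (t + c)) := by positivity
    linarith

lemma sum_update_apply {I J M : Type*} [Fintype I] [DecidableEq I] [AddCommGroup M]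
    (x : I → J → M) (i : I) (ξ : J → M) (j : J) :
    ∑ k, Function.update x i ξ k j = ξ j + (∑ k, x k j - x i j) := by
  have column_update (k : I) :
      Function.update x i ξ k j = Function.update (fun k => x k j) i (ξ j) k :=
    Function.apply_update (fun _ (row : J → M) => row j) x i ξ k
  simp only [column_update, sum_update_of_mem (mem_univ i),
    sum_eq_add_sum_sdiff_singleton_of_mem (mem_univ i) (fun k => x k j), add_sub_cancel_left]

variable {I J : Type*} [Fintype I] {w x : I → J → ℝ} {i : I}

/-- The marginal utility of user `i` on machine `j`: the derivative of `w i j * (t / (t + c))` at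
the current bid `t = x i j`, where `c` is the total bid of the other users on `j`. -/
noncomputable def marginalUtility (w x : I → J → ℝ) (i : I) (j : J) : ℝ :=
  w i j * ((∑ k, x k j - x i j) / (∑ k, x k j) ^ 2)

variable [Fintype J]

lemma sum_util_eq_sum_div (w x : I → J → ℝ) :
    ∑ i, util w x i = ∑ j, (∑ i, w i j * x i j) / ∑ i, x i j := by
  simp only [util, sum_div, mul_div_assoc]
  exact sum_comm

variable [DecidableEq I] {ξ : J → ℝ}

lemma util_update_le_add_sum_marginalUtility (hw : ∀ j, 0 ≤ w i j) (hx : ∀ k j, 0 ≤ x k j)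
    (hY : ∀ j, 0 < ∑ k, x k j) (hξ : ∀ j, 0 ≤ ξ j) :
    util w (Function.update x i ξ) i ≤
      util w x i + ∑ j, marginalUtility w x i j * (ξ j - x i j) := by
  simp only [util, marginalUtility, sum_update_apply, Function.update_self, ← sum_add_distrib]
  refine sum_le_sum fun j _ => ?_
  have others_nonneg : 0 ≤ ∑ k, x k j - x i j :=
    sub_nonneg.2 (single_le_sum (fun k _ => hx k j) (mem_univ i))
  have tangent := div_add_le_tangent (a := x i j) (hξ j) others_nonneg (by simpa using hY j)
  rw [add_sub_cancel] at tangent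
  rw [mul_assoc, ← mul_add]
  exact mul_le_mul_of_nonneg_left tangent (hw j)

lemma util_update_le_of_marginalUtility_le {price : ℝ} (hw : ∀ j, 0 ≤ w i j)
    (hx : ∀ k j, 0 ≤ x k j) (hY : ∀ j, 0 < ∑ k, x k j)
    (hle : ∀ j, marginalUtility w x i j ≤ price)
    (heq : ∀ j, x i j ≠ 0 → marginalUtility w x i j = price)
    (hξ : ∀ j, 0 ≤ ξ j) (hsum : ∑ j, ξ j = ∑ j, x i j) :
    util w (Function.update x i ξ) i ≤ util w x i := by
  have first_order : ∑ j, marginalUtility w x i j * (ξ j - x i j) ≤ 0 := calc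
    _ ≤ ∑ j, price * (ξ j - x i j) := by
        refine sum_le_sum fun j _ => ?_
        by_cases hj : x i j = 0
        · simpa [hj] using mul_le_mul_of_nonneg_right (hle j) (hξ j)
        · rw [heq j hj]
    _ = 0 := by rw [← mul_sum, sum_sub_distrib, hsum, sub_self, mul_zero]
  linarith [util_update_le_add_sum_marginalUtility hw hx hY hξ]

theorem isNash_of_marginalUtility_le {X : I → ℝ} (price : I → ℝ) (hw : ∀ i j, 0 ≤ w i j)
    (hx : ∀ i j, 0 ≤ x i j) (hX : ∀ i, ∑ j, x i j = X i) (hY : ∀ j, 0 < ∑ i, x i j)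
    (hle : ∀ i j, marginalUtility w x i j ≤ price i)
    (heq : ∀ i j, x i j ≠ 0 → marginalUtility w x i j = price i) :
    IsNash X w x :=
  ⟨⟨hx, hX⟩, fun i _ hξ hsum => util_update_le_of_marginalUtility_le (hw i) hx hY (hle i) (heq i)
    hξ (hsum.trans (hX i).symm)⟩

end BestResponse

/-- The matrix with a uniform row for each element of `A` and a focused row for each element of
`J`. It serves both as the weights of the game with uniform users `A`, machines `J` and one
focused user per machine, and as the bid profile in which every user bids his own weights. -/
noncomputable def uniformFocused (A J : Type*) [Fintype J] [DecidableEq J] : A ⊕ J → J → ℝ :=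
  Sum.elim (fun _ _ => 1 / (Fintype.card J : ℝ)) (fun k j => if j = k then 1 else 0)

namespace uniformFocused

variable {A J : Type*} [Fintype J] [DecidableEq J]

lemma nonneg (i : A ⊕ J) (j : J) : 0 ≤ uniformFocused A J i j := by
  rcases i with a | k
  · simp [uniformFocused]
  · simp only [uniformFocused, Sum.elim_inr]
    split_ifs <;> norm_num

lemma sum_row [Nonempty J] (i : A ⊕ J) : ∑ j, uniformFocused A J i j = 1 := by
  rcases i with a | k <;> simp [uniformFocused]

lemma le_one (i : A ⊕ J) (j : J) : uniformFocused A J i j ≤ 1 := by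
  have : Nonempty J := ⟨j⟩
  exact (single_le_sum (fun l _ => nonneg i l) (mem_univ j)).trans_eq (sum_row i)

variable [Fintype A]

lemma sup'_column (j : J) :
    univ.sup' ⟨Sum.inr j, mem_univ _⟩ (fun i => uniformFocused A J i j) = 1 := by
  refine le_antisymm (sup'_le _ _ fun i _ => le_one i j) ?_
  exact le_sup'_of_le _ (mem_univ (Sum.inr j)) (by simp [uniformFocused])

lemma sum_column (j : J) :
    ∑ i, uniformFocused A J i j = (Fintype.card A : ℝ) / Fintype.card J + 1 := by
  simp [uniformFocused, div_eq_mul_inv]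

lemma sum_column_mul_self (j : J) :
    ∑ i, uniformFocused A J i j * uniformFocused A J i j =
      (Fintype.card A : ℝ) / (Fintype.card J : ℝ) ^ 2 + 1 := by
  simp [uniformFocused, div_eq_mul_inv, sq]

lemma sum_util :
    ∑ i, util (uniformFocused A J) (uniformFocused A J) i =
      Fintype.card J * (((Fintype.card A : ℝ) / (Fintype.card J : ℝ) ^ 2 + 1) /
        ((Fintype.card A : ℝ) / Fintype.card J + 1)) := by
  simp only [sum_util_eq_sum_div, sum_column, sum_column_mul_self, sum_const, card_univ,
    nsmul_eq_mul]

lemma marginalUtility_inl (a : A) (j : J) :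
    marginalUtility (uniformFocused A J) (uniformFocused A J) (Sum.inl a) j =
      1 / (Fintype.card J : ℝ) *
        (((Fintype.card A : ℝ) / Fintype.card J + 1 - 1 / Fintype.card J) /
          ((Fintype.card A : ℝ) / Fintype.card J + 1) ^ 2) := by
  rw [marginalUtility, sum_column, uniformFocused, Sum.elim_inl]

lemma marginalUtility_inr (k j : J) :
    marginalUtility (uniformFocused A J) (uniformFocused A J) (Sum.inr k) j =
      if j = k then (Fintype.card A : ℝ) / Fintype.card J /
        ((Fintype.card A : ℝ) / Fintype.card J + 1) ^ 2 else 0 := by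
  rw [marginalUtility, sum_column, uniformFocused, Sum.elim_inr]
  split_ifs <;> simp

theorem isNash [DecidableEq A] [Nonempty J] :
    IsNash (fun _ => 1) (uniformFocused A J) (uniformFocused A J) := by
  let Y : ℝ := (Fintype.card A : ℝ) / Fintype.card J + 1
  let price : A ⊕ J → ℝ := Sum.elim
    (fun _ => 1 / Fintype.card J * ((Y - 1 / Fintype.card J) / Y ^ 2))
    (fun _ => (Fintype.card A : ℝ) / Fintype.card J / Y ^ 2)
  refine isNash_of_marginalUtility_le price nonneg nonneg sum_row (fun j => ?_) ?_ ?_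
  · rw [sum_column]
    positivity
  · rintro (a | k) j
    · exact (marginalUtility_inl a j).le
    · rw [marginalUtility_inr]
      split_ifs
      · exact le_rfl
      · simp only [price, Sum.elim_inr]
        positivity
  · rintro (a | k) j bid_ne_zero
    · exact marginalUtility_inl a j
    · obtain rfl : j = k := by simpa [uniformFocused] using bid_ne_zero
      exact (marginalUtility_inr j j).trans (if_pos rfl)

end uniformFocused

/-- Worst-case efficiency example: for `n ≥ 2`, in the normalized game
with `n` machines and `m = n² + n` users — `n²` uniform users with weight `1/n` on every
machine and `n` focused users, the `k`-th having weight `1` on machine `k` and `0`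
elsewhere — the profile where every uniform user bids `1/n` on every machine and the
`k`-th focused user bids `1` on machine `k` is a Nash equilibrium; the total bid on
every machine is `n + 1`, the social welfare equals `2n/(n+1) < 2`, the social optimum
equals `n`, and hence the efficiency equals `2/(n+1)`. -/
theorem worstCase_efficiency_example (n : ℕ) (hn : 2 ≤ n) :
    let w : Fin (n ^ 2) ⊕ Fin n → Fin n → ℝ :=
      Sum.elim (fun _ _ => 1 / (n : ℝ)) (fun k j => if j = k then 1 else 0)
    let x : Fin (n ^ 2) ⊕ Fin n → Fin n → ℝ :=
      Sum.elim (fun _ _ => 1 / (n : ℝ)) (fun k j => if j = k then 1 else 0)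
    IsNash (fun _ => 1) w x ∧
    (∀ j, ∑ i, x i j = (n : ℝ) + 1) ∧
    (∑ i, util w x i = 2 * (n : ℝ) / ((n : ℝ) + 1)) ∧
    (2 * (n : ℝ) / ((n : ℝ) + 1) < 2) ∧
    (∑ j, Finset.univ.sup' ⟨Sum.inr j, Finset.mem_univ _⟩ (fun i => w i j) = (n : ℝ)) ∧
    ((∑ i, util w x i) /
        (∑ j, Finset.univ.sup' ⟨Sum.inr j, Finset.mem_univ _⟩ (fun i => w i j))
      = 2 / ((n : ℝ) + 1)) := by
  intro w x
  have : NeZero n := ⟨by lia⟩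
  have hw : w = uniformFocused (Fin (n ^ 2)) (Fin n) := by simp [w, uniformFocused]
  have hx : x = uniformFocused (Fin (n ^ 2)) (Fin n) := hw
  have nash : IsNash (fun _ => 1) w x := by
    rw [hw, hx]
    exact uniformFocused.isNash
  have total (j : Fin n) : ∑ i, x i j = (n : ℝ) + 1 := by
    rw [hx, uniformFocused.sum_column, Fintype.card_fin, Fintype.card_fin, Nat.cast_pow]
    field_simp
  have welfare : ∑ i, util w x i = 2 * (n : ℝ) / ((n : ℝ) + 1) := by
    rw [hw, hx, uniformFocused.sum_util, Fintype.card_fin, Fintype.card_fin, Nat.cast_pow]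
    field_simp
    norm_num
  have optimum : ∑ j, univ.sup' ⟨Sum.inr j, mem_univ _⟩ (fun i => w i j) = (n : ℝ) := by
    rw [hw, sum_congr rfl fun j _ => uniformFocused.sup'_column j]
    simp
  refine ⟨nash, total, welfare, ?_, optimum, ?_⟩
  · rw [div_lt_iff₀ (by positivity)]
    linarith
  · rw [welfare, optimum]
    field_simp
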